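/- arXiv:2207.09681 — 3 statements merged into one kernel-verified Lean document; each statement's English description precedes it below -/
import Mathlib

section
/- Let T be a tree. Then φ(K1∇T) = ⌊v(T)/2⌋. -/
open scoped Classical

namespace PaperEDC

/-- `G` contains `m` pairwise edge-disjoint cycles. -/
def HasEDC {V : Type*} (G : SimpleGraph V) (m : ℕ) : Prop :=
  ∃ c : Fin m → Σ v : V, G.Walk v v,
    (∀ i, (c i).2.IsCycle) ∧
    ∀ i j, i ≠ j → ∀ e ∈ (c i).2.edges, e ∉ (c j).2.edges

/-- `φ(G)`: the maximum number of pairwise edge-disjoint cycles in `G`. -/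
noncomputable def phi {V : Type*} (G : SimpleGraph V) : ℕ := sSup {m | HasEDC G m}

/-- `K₁ ∇ H`: the join of a single new vertex with `H`. -/
def joinK1 {V : Type*} (H : SimpleGraph V) : SimpleGraph (Option V) :=
  SimpleGraph.fromRel fun a b => a = none ∨ ∃ u v, a = some u ∧ b = some v ∧ H.Adj u v

/-- `t(G)`: the number of triangles of `G`. -/
noncomputable def triCount {V : Type*} (G : SimpleGraph V) : ℕ :=
  Nat.card {s : Finset V // G.IsNClique 3 s}

/-- A triangle-cactus: a connected graph in which every edge lies on a cycle and every
cycle is a triangle. -/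
def IsTriangleCactus {V : Type*} (G : SimpleGraph V) : Prop :=
  G.Connected ∧
  (∀ e ∈ G.edgeSet, ∃ (v : V) (w : G.Walk v v), w.IsCycle ∧ e ∈ w.edges) ∧
  ∀ (v : V) (w : G.Walk v v), w.IsCycle → w.length = 3

/-- `e(G)`: the number of edges of `G`. -/
noncomputable def ecard {V : Type*} (G : SimpleGraph V) : ℕ := Nat.card G.edgeSet

/-- `ρ(G)`: the spectral radius (largest adjacency eigenvalue) of `G`. -/
noncomputable def specRad {V : Type*} [Fintype V] (G : SimpleGraph V) : ℝ :=
  sSup {x : ℝ | ∃ f : V → ℝ, f ≠ 0 ∧ ∀ v : V, ∑ u : V, (if G.Adj v u then f u else 0) = x * f v}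

/-!
Upper bound: deleting the new vertex leaves the tree, so every cycle of `K₁ ∇ T` passes through it
and uses two of the `v(T)` edges there; edge-disjoint cycles use different ones.

Lower bound: pair up `2 * m` vertices of `T` so that the sum of the distances within pairs is
minimal, and join each pair by a geodesic. These geodesics are edge-disjoint, since if two of them
shared an edge, exchanging partners and omitting that edge would lower the sum. Closing each
geodesic through the new vertex gives `m` edge-disjoint cycles.
-/

section EdgeDisjointPaths

variable {V : Type*} {G : SimpleGraph V} {u v x y a b : V}

theorem dist_add_dist_le_of_common_subwalk {p : G.Walk u v} {q : G.Walk x y} {s : G.Walk a b}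
    (hp : s.IsSubwalk p) (hq : s.IsSubwalk q) :
    G.dist u x + G.dist v y + 2 * s.length ≤ p.length + q.length := by
  obtain ⟨p₁, p₂, rfl⟩ := hp
  obtain ⟨q₁, q₂, rfl⟩ := hq
  have hux : G.dist u x ≤ (p₁.append q₁.reverse).length := SimpleGraph.dist_le _
  have hvy : G.dist v y ≤ (p₂.reverse.append q₂).length := SimpleGraph.dist_le _
  simp only [SimpleGraph.Walk.length_append, SimpleGraph.Walk.length_reverse] at *
  omega

theorem isSubwalk_reverse {p : G.Walk u v} {s : G.Walk a b} (h : s.IsSubwalk p) :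
    s.reverse.IsSubwalk p.reverse := by
  obtain ⟨p₁, p₂, rfl⟩ := h
  exact ⟨p₂.reverse, p₁.reverse, by
    simp only [SimpleGraph.Walk.reverse_append, SimpleGraph.Walk.append_assoc]⟩

theorem dist_add_dist_lt_of_common_edge {p : G.Walk u v} {q : G.Walk x y}
    {e : Sym2 V} (hp : e ∈ p.edges) (hq : e ∈ q.edges) :
    G.dist u x + G.dist v y < p.length + q.length ∨
      G.dist u y + G.dist v x < p.length + q.length := by
  induction e with | _ a b
  have hab : G.Adj a b := p.adj_of_mem_edges hp
  have same_direction {c d x y : V} {q : G.Walk x y} (h : G.Adj c d)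
      (hp : h.toWalk.IsSubwalk p) (hq : h.toWalk.IsSubwalk q) :
      G.dist u x + G.dist v y < p.length + q.length := by
    have := dist_add_dist_le_of_common_subwalk hp hq
    rw [SimpleGraph.Walk.length_cons] at this
    omega
  have opposite_direction {c d : V} (h : G.Adj c d)
      (hp : h.toWalk.IsSubwalk p) (hq : h.symm.toWalk.IsSubwalk q) :
      G.dist u y + G.dist v x < p.length + q.length := by
    simpa using same_direction h hp (isSubwalk_reverse hq)
  rcases (SimpleGraph.Walk.isSubwalk_toWalk_iff_mem_edges hab).2 hp with hp | hp <;>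
    rcases (SimpleGraph.Walk.isSubwalk_toWalk_iff_mem_edges hab).2 hq with hq | hq
  · exact .inl (same_direction hab hp hq)
  · exact .inr (opposite_direction hab hp hq)
  · exact .inr (opposite_direction hab.symm hp hq)
  · exact .inl (same_direction hab.symm hp hq)

theorem exists_perm_forall_cost_le_exchange {ι M : Type*} [Finite ι] [AddCommMonoid M]
    [LinearOrder M] [IsOrderedCancelAddMonoid M] (d : ι × Bool → ι × Bool → M)
    (hd : ∀ a b, d a b = d b a) :
    ∃ σ : Equiv.Perm (ι × Bool), ∀ i j, i ≠ j → ∀ t,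
      d (σ (i, false)) (σ (i, true)) + d (σ (j, false)) (σ (j, true)) ≤
        d (σ (i, false)) (σ (j, t)) + d (σ (i, true)) (σ (j, !t)) := by
  have := Fintype.ofFinite ι
  let cost (σ : Equiv.Perm (ι × Bool)) (k : ι) : M := d (σ (k, false)) (σ (k, true))
  obtain ⟨σ, hσ⟩ := Finite.exists_min fun σ => ∑ k, cost σ k
  refine ⟨σ, fun i j hij t => ?_⟩
  let τ : Equiv.Perm (ι × Bool) := (Equiv.swap (i, true) (j, t)).trans σ
  have off_pair : ∑ k ∈ {i, j}ᶜ, cost τ k = ∑ k ∈ {i, j}ᶜ, cost σ k :=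
    Finset.sum_congr rfl fun k hk => by
      obtain ⟨hki, hkj⟩ : k ≠ i ∧ k ≠ j := by simpa using hk
      simp [cost, τ, Equiv.swap_apply_def, hki, hkj]
  have on_pair : cost σ i + cost σ j ≤ cost τ i + cost τ j := by
    have := hσ τ
    rw [← Finset.sum_compl_add_sum {i, j} (cost σ), ← Finset.sum_compl_add_sum {i, j} (cost τ),
      off_pair, Finset.sum_pair hij, Finset.sum_pair hij] at this
    exact le_of_add_le_add_left this
  cases t <;> simpa [cost, τ, Equiv.swap_apply_def, hij, hij.symm, hd] using on_pair

theorem exists_edgeDisjoint_paths {ι : Type*} [Finite ι] (hG : G.Connected) (f : ι × Bool → V) :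
    ∃ (σ : Equiv.Perm (ι × Bool)) (p : ∀ i, G.Walk (f (σ (i, false))) (f (σ (i, true)))),
      (∀ i, (p i).IsPath) ∧ Pairwise fun i j => (p i).edges.Disjoint (p j).edges := by
  obtain ⟨σ, hσ⟩ := exists_perm_forall_cost_le_exchange (fun a b => G.dist (f a) (f b))
    fun _ _ => G.dist_comm
  choose p hp hlen using fun i => hG.exists_path_of_dist (f (σ (i, false))) (f (σ (i, true)))
  refine ⟨σ, p, hp, fun i j hij e hi hj => ?_⟩
  have hcross := dist_add_dist_lt_of_common_edge hi hj
  rw [hlen, hlen] at hcross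
  exact hcross.elim (hσ i j hij false).not_gt (hσ i j hij true).not_gt

end EdgeDisjointPaths

section Cycles

variable {V : Type*} {G : SimpleGraph V}

theorem exists_mem_support_notMem_range_of_isCycle {W : Type*} {H : SimpleGraph W} (f : H ↪g G)
    (hH : H.IsAcyclic) {v : V} {w : G.Walk v v} (hw : w.IsCycle) :
    ∃ x ∈ w.support, x ∉ Set.range f := by
  by_contra! hrange
  refine f.isoInduceRange.isAcyclic_iff.1 hH (w.induce _ hrange) ?_
  rw [← SimpleGraph.Walk.map_induce w hrange] at hw
  exact hw.of_map

theorem HasEDC.two_mul_le_degree {m : ℕ} (hG : HasEDC G m) {v : V} [Fintype (G.neighborSet v)]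
    (hv : ∀ ⦃u⦄ (w : G.Walk u u), w.IsCycle → v ∈ w.support) : 2 * m ≤ G.degree v := by
  obtain ⟨c, hc, hdisj⟩ := hG
  let N (i : Fin m) : Set V := (c i).2.toSubgraph.neighborSet v
  have ncard_N (i : Fin m) : (N i).ncard = 2 :=
    (hc i).ncard_neighborSet_toSubgraph_eq_two (hv _ (hc i))
  have disjoint_N : Pairwise (Function.onFun Disjoint N) := fun i j hij =>
    Set.disjoint_left.2 fun x hi hj => hdisj i j hij s(v, x)
      (SimpleGraph.Walk.adj_toSubgraph_iff_mem_edges.1 hi)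
      (SimpleGraph.Walk.adj_toSubgraph_iff_mem_edges.1 hj)
  calc
    2 * m = ∑ i, (N i).ncard := by simp [ncard_N, mul_comm]
    _ = (⋃ i, N i).ncard := by
      rw [Set.ncard_iUnion_of_finite (fun i => Set.finite_of_ncard_ne_zero (by simp [ncard_N]))
        disjoint_N, finsum_eq_sum_of_fintype]
    _ ≤ (G.neighborSet v).ncard := Set.ncard_le_ncard
      (Set.iUnion_subset fun i => (c i).2.toSubgraph.neighborSet_subset v)
    _ = G.degree v := by
      rw [Set.ncard_eq_toFinset_card', Set.toFinset_card, G.card_neighborSet_eq_degree]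

end Cycles

section ConeCycle

variable {V : Type*} {G : SimpleGraph V} {u v w x y : V}

/-- The closed walk that closes up a walk `p` through a common neighbour `w` of its endpoints; a
cycle when `p` is a nontrivial path avoiding `w`. It is based at the start of `p`. -/
def coneCycle (p : G.Walk u v) (hu : G.Adj w u) (hv : G.Adj w v) : G.Walk u u :=
  p.append (.cons hv.symm hu.toWalk)

theorem mem_edges_coneCycle {p : G.Walk u v} {hu : G.Adj w u} {hv : G.Adj w v} {e : Sym2 V} :
    e ∈ (coneCycle p hu hv).edges ↔ e ∈ p.edges ∨ e = s(w, v) ∨ e = s(w, u) := by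
  simp [coneCycle, Sym2.eq_swap (a := v)]

theorem isCycle_coneCycle {p : G.Walk u v} (hp : p.IsPath) (huv : u ≠ v) (hw : w ∉ p.support)
    (hu : G.Adj w u) (hv : G.Adj w v) : (coneCycle p hu hv).IsCycle := by
  have hu_tail : u ∉ p.support.tail :=
    (List.nodup_cons.1 (p.cons_tail_support ▸ hp.support_nodup)).1
  refine hp.isCycle_append (hu.isPath_toWalk.cons ?_) ?_ (.inr (by simp))
  · simp [hv.ne', huv.symm]
  · simpa using ⟨fun h => hw (List.mem_of_mem_tail h), hu_tail⟩

theorem disjoint_edges_coneCycle {p : G.Walk u v} {q : G.Walk x y} (hpq : p.edges.Disjoint q.edges)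
    (hwp : w ∉ p.support) (hwq : w ∉ q.support) (hends : [u, v].Disjoint [x, y])
    (hu : G.Adj w u) (hv : G.Adj w v) (hx : G.Adj w x) (hy : G.Adj w y) :
    (coneCycle p hu hv).edges.Disjoint (coneCycle q hx hy).edges := by
  have spoke_notMem {a b z : V} {r : G.Walk a b} (hwr : w ∉ r.support) : s(w, z) ∉ r.edges :=
    fun h => hwr (r.fst_mem_support_of_mem_edges h)
  intro e hp hq
  rw [mem_edges_coneCycle] at hp hq
  obtain ⟨⟨hux, hvx⟩, huy, hvy⟩ : (u ≠ x ∧ v ≠ x) ∧ u ≠ y ∧ v ≠ y := by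
    simpa [eq_comm] using hends
  rcases hp with hp | rfl | rfl
  · obtain rfl | rfl := hq.resolve_left (hpq hp) <;> exact spoke_notMem hwp hp
  · simp [spoke_notMem hwq, hvx, hvy, hv.ne'] at hq
  · simp [spoke_notMem hwq, hux, huy, hu.ne'] at hq

end ConeCycle

section Join

variable {V : Type*} {H : SimpleGraph V} {u v : V}

theorem joinK1_isUniversal_none (H : SimpleGraph V) : (joinK1 H).IsUniversal none :=
  fun _ h => (SimpleGraph.fromRel_adj ..).2 ⟨h, .inl (.inl rfl)⟩

theorem joinK1_adj_some_some : (joinK1 H).Adj (some u) (some v) ↔ H.Adj u v := by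
  simp only [joinK1, SimpleGraph.fromRel_adj]
  grind [SimpleGraph.Adj.symm, SimpleGraph.Adj.ne]

theorem degree_joinK1_none [Fintype V] (H : SimpleGraph V) :
    (joinK1 H).degree none = Fintype.card V := by
  rw [(SimpleGraph.degree_eq_card_sub_one _ _).2 (joinK1_isUniversal_none H),
    Fintype.card_option, Nat.add_sub_cancel]

/-- The inclusion of `H` into `K₁ ∇ H`. -/
def joinK1Embedding (H : SimpleGraph V) : H ↪g joinK1 H where
  toEmbedding := .some
  map_rel_iff' := joinK1_adj_some_some

theorem hasEDC_joinK1_of_connected (hH : H.Connected) {m : ℕ} (f : Fin m × Bool ↪ V) :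
    HasEDC (joinK1 H) m := by
  obtain ⟨σ, p, hp, hdisj⟩ := exists_edgeDisjoint_paths hH f
  let ι : H →g joinK1 H := (joinK1Embedding H).toHom
  have hι : Function.Injective ι := (joinK1Embedding H).injective
  have none_adj (x : V) : (joinK1 H).Adj none (ι x) :=
    joinK1_isUniversal_none H (Option.some_ne_none x).symm
  have none_notMem {x y : V} (q : H.Walk x y) : none ∉ (q.map ι).support := by
    rw [SimpleGraph.Walk.support_map, List.mem_map]
    rintro ⟨z, -, hz⟩
    exact Option.some_ne_none z hz
  refine ⟨fun i => ⟨_, coneCycle ((p i).map ι) (none_adj _) (none_adj _)⟩,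
    fun i => isCycle_coneCycle ((hp i).map hι) (by simp [hι.eq_iff]) (none_notMem _)
      (none_adj _) (none_adj _),
    fun i j hij => disjoint_edges_coneCycle ?_ (none_notMem _) (none_notMem _)
      (by simp [hι.eq_iff, hij.symm]) (none_adj _) (none_adj _) (none_adj _) (none_adj _)⟩
  rw [SimpleGraph.Walk.edges_map, SimpleGraph.Walk.edges_map]
  exact (hdisj hij).map (Sym2.map.injective hι)

theorem none_mem_support_of_isCycle (hH : H.IsAcyclic) {x : Option V} {w : (joinK1 H).Walk x x}
    (hw : w.IsCycle) : none ∈ w.support := by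
  obtain ⟨y, hy, hyH⟩ := exists_mem_support_notMem_range_of_isCycle (joinK1Embedding H) hH hw
  cases y with
  | none => exact hy
  | some y => exact absurd ⟨y, rfl⟩ hyH

end Join

/-- If `T` is a tree, then `φ(K₁ ∇ T) = ⌊v(T)/2⌋`. -/
theorem phi_joinK1_tree {V : Type*} [Fintype V] (T : SimpleGraph V) (hT : T.IsTree) :
    phi (joinK1 T) = Fintype.card V / 2 := by
  have hcard : 2 * (Fintype.card V / 2) ≤ Fintype.card V := Nat.mul_div_le _ _
  obtain ⟨f⟩ : Nonempty (Fin (Fintype.card V / 2) × Bool ↪ V) :=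
    Function.Embedding.nonempty_of_card_le (by simpa [mul_comm] using hcard)
  refine IsGreatest.csSup_eq ⟨hasEDC_joinK1_of_connected hT.connected f, fun m hm => ?_⟩
  have := hm.two_mul_le_degree fun _ _ => none_mem_support_of_isCycle hT.isAcyclic
  rw [degree_joinK1_none] at this
  omega

end PaperEDC
end

section
/- Let H be a connected simple graph with at least 2 vertices, and set s = φ(K1∇H). Then v(H) ≤ 2s+1 and e(H) ≤ s(2s+1). -/
/-!
Pair up `2 ⌊v(H) / 2⌋` vertices of `H` so that the sum of the distances within the pairs is least,
and join each pair by a shortest path. If two of these paths shared an edge, then exchanging a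
partner between the two pairs would lower the sum, by at least the two traversals of that edge.
So the paths are edge-disjoint, and closing each one through the apex of `K₁ ∇ H` gives
`⌊v(H) / 2⌋` edge-disjoint cycles. This bounds `v(H)`, and then `e(H)` is bounded by the number of
pairs of vertices.
-/

open scoped Classical

namespace PaperEDC

section ShortPairings

variable {V ι M : Type*} {G : SimpleGraph V}

theorem exists_walks_of_mem_edges {a b : V} {w : G.Walk a b} {e : Sym2 V} (he : e ∈ w.edges) :
    ∃ (x y : V) (p : G.Walk a x) (q : G.Walk y b),
      e = s(x, y) ∧ p.length + 1 + q.length = w.length := by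
  induction e with | _ x y
  have hxy : G.Adj x y := w.adj_of_mem_edges he
  rcases (SimpleGraph.Walk.isSubwalk_toWalk_iff_mem_edges hxy).2 he with
    ⟨p, q, rfl⟩ | ⟨p, q, rfl⟩
  · exact ⟨x, y, p, q, rfl, by simp⟩
  · exact ⟨y, x, p, q, Sym2.eq_swap, by simp⟩

theorem disjoint_edges_of_length_add_length_le {a b c d : V} {w : G.Walk a b} {w' : G.Walk c d}
    (hstarts : w.length + w'.length ≤ G.dist a c + G.dist b d)
    (hcross : w.length + w'.length ≤ G.dist a d + G.dist c b) :
    w.edges.Disjoint w'.edges := by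
  intro e he he'
  obtain ⟨x, y, p, q, rfl, hw⟩ := exists_walks_of_mem_edges he
  obtain ⟨x', y', p', q', hxy, hw'⟩ := exists_walks_of_mem_edges he'
  obtain ⟨rfl, rfl⟩ | ⟨rfl, rfl⟩ := Sym2.eq_iff.1 hxy
  · have hac : G.dist a c ≤ p.length + p'.length := by
      simpa using SimpleGraph.dist_le (p.append p'.reverse)
    have hbd : G.dist b d ≤ q.length + q'.length := by
      simpa using SimpleGraph.dist_le (q.reverse.append q')
    omega
  · have had : G.dist a d ≤ p.length + q'.length := by
      simpa using SimpleGraph.dist_le (p.append q')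
    have hcb : G.dist c b ≤ p'.length + q.length := by
      simpa using SimpleGraph.dist_le (p'.append q)
    omega

theorem add_le_add_of_sum_le_sum [AddCommMonoid M] [PartialOrder M] [IsOrderedCancelAddMonoid M]
    [Fintype ι] {f g : ι → M} {i j : ι} (hij : i ≠ j)
    (hfg : ∀ l, l ≠ i → l ≠ j → f l = g l) (hle : ∑ l, f l ≤ ∑ l, g l) :
    f i + f j ≤ g i + g j := by
  have hrest : ∑ l ∈ {i, j}ᶜ, f l = ∑ l ∈ {i, j}ᶜ, g l :=
    Finset.sum_congr rfl fun l hl ↦ by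
      simp only [Finset.mem_compl, Finset.mem_insert, Finset.mem_singleton, not_or] at hl
      exact hfg l hl.1 hl.2
  rw [← Finset.sum_add_sum_compl {i, j} f, ← Finset.sum_add_sum_compl {i, j} g, hrest,
    Finset.sum_pair hij, Finset.sum_pair hij] at hle
  exact le_of_add_le_add_right hle

/-- The total cost of a pairing of `ι × Bool`, to be minimised over all pairings. The pairing is
encoded by a permutation `σ`, with pairs `(σ (i, false), σ (i, true))`. -/
def pairingCost [AddCommMonoid M] [Fintype ι] (c : ι × Bool → ι × Bool → M)
    (σ : Equiv.Perm (ι × Bool)) : M :=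
  ∑ i, c (σ (i, false)) (σ (i, true))

theorem cost_add_cost_le_of_pairingCost_minimal [AddCommMonoid M] [PartialOrder M]
    [IsOrderedCancelAddMonoid M] [Fintype ι] {c : ι × Bool → ι × Bool → M}
    {σ : Equiv.Perm (ι × Bool)} (hσ : ∀ τ, pairingCost c σ ≤ pairingCost c τ)
    {i j : ι} (hij : i ≠ j) :
    c (σ (i, false)) (σ (i, true)) + c (σ (j, false)) (σ (j, true)) ≤
        c (σ (i, false)) (σ (j, false)) + c (σ (i, true)) (σ (j, true)) ∧
      c (σ (i, false)) (σ (i, true)) + c (σ (j, false)) (σ (j, true)) ≤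
        c (σ (i, false)) (σ (j, true)) + c (σ (j, false)) (σ (i, true)) := by
  constructor
  · have hswap := hσ ((Equiv.swap (i, true) (j, false)).trans σ)
    have := add_le_add_of_sum_le_sum hij
      (fun l hi hj ↦ by simp [Equiv.swap_apply_def, hi, hj]) hswap
    simpa [Equiv.swap_apply_def, hij, hij.symm] using this
  · have hswap := hσ ((Equiv.swap (i, true) (j, true)).trans σ)
    have := add_le_add_of_sum_le_sum hij
      (fun l hi hj ↦ by simp [Equiv.swap_apply_def, hi, hj]) hswap
    simpa [Equiv.swap_apply_def, hij, hij.symm] using this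

theorem exists_perm_pairwise_disjoint_paths [Finite ι] (hG : G.Preconnected)
    (p : ι × Bool → V) :
    ∃ (σ : Equiv.Perm (ι × Bool)) (w : ∀ i, G.Walk (p (σ (i, false))) (p (σ (i, true)))),
      (∀ i, (w i).IsPath) ∧ Pairwise fun i j ↦ (w i).edges.Disjoint (w j).edges := by
  cases nonempty_fintype ι
  obtain ⟨σ, hσ⟩ := Finite.exists_min (pairingCost fun u v ↦ G.dist (p u) (p v))
  choose w hpath hlength using fun i ↦
    (hG (p (σ (i, false))) (p (σ (i, true)))).exists_path_of_dist
  refine ⟨σ, w, hpath, fun i j hij ↦ ?_⟩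
  obtain ⟨hstarts, hcross⟩ := cost_add_cost_le_of_pairingCost_minimal hσ hij
  apply disjoint_edges_of_length_add_length_le
  · rwa [hlength, hlength]
  · rwa [hlength, hlength]

end ShortPairings

section ApexCycles

variable {V : Type*} {G : SimpleGraph V}

theorem exists_isCycle_of_isPath_of_adj {a b x : V} {w : G.Walk a b} (hw : w.IsPath) (hab : a ≠ b)
    (hx : x ∉ w.support) (ha : G.Adj x a) (hb : G.Adj x b) :
    ∃ c : G.Walk a a, c.IsCycle ∧
      ∀ e ∈ c.edges, e ∈ w.edges ∨ e = s(x, a) ∨ e = s(x, b) := by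
  let detour : G.Walk b a := .cons hb.symm (.cons ha .nil)
  have hdetour : detour.IsPath := by
    simp [detour, hab.symm, hb.ne.symm, ha.ne]
  have hdisjoint : w.support.tail.Disjoint detour.support.tail := by
    have ha_tail : a ∉ w.support.tail := by
      have := hw.support_nodup
      rw [← w.cons_tail_support, List.nodup_cons] at this
      exact this.1
    have hx_tail : x ∉ w.support.tail := fun h ↦ hx (List.mem_of_mem_tail h)
    simp [detour, ha_tail, hx_tail]
  refine ⟨w.append detour, hw.isCycle_append hdetour hdisjoint (.inr (by simp [detour])), ?_⟩
  intro e he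
  simp only [detour, SimpleGraph.Walk.edges_append, SimpleGraph.Walk.edges_cons,
    SimpleGraph.Walk.edges_nil, List.mem_append, List.mem_cons, List.not_mem_nil, or_false] at he
  rwa [Sym2.eq_swap (a := b), or_comm (a := e = s(x, b))] at he

theorem hasEDC_of_pairwise_disjoint_paths {x : V} {m : ℕ} {p : Fin m × Bool → V}
    (hp : p.Injective) (hadj : ∀ k, G.Adj x (p k))
    {w : ∀ i, G.Walk (p (i, false)) (p (i, true))} (hpath : ∀ i, (w i).IsPath)
    (hx : ∀ i, x ∉ (w i).support)
    (hdisjoint : Pairwise fun i j ↦ (w i).edges.Disjoint (w j).edges) :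
    HasEDC G m := by
  choose c hcycle hedges using fun i ↦
    exists_isCycle_of_isPath_of_adj (hpath i) (hp.ne (by simp)) (hx i) (hadj _) (hadj _)
  have mem_or_spoke (i : Fin m) (e : Sym2 V) (he : e ∈ (c i).edges) :
      e ∈ (w i).edges ∨ ∃ b, e = s(x, p (i, b)) := by
    rcases hedges i e he with h | h | h
    exacts [.inl h, .inr ⟨_, h⟩, .inr ⟨_, h⟩]
  have spoke_notMem (i : Fin m) (k : Fin m × Bool) : s(x, p k) ∉ (w i).edges :=
    fun h ↦ hx i ((w i).fst_mem_support_of_mem_edges h)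
  refine ⟨fun i ↦ ⟨_, c i⟩, hcycle, fun i j hij e hi hj ↦ ?_⟩
  rcases mem_or_spoke i e hi with hi | ⟨b, rfl⟩ <;>
    rcases mem_or_spoke j _ hj with hj | ⟨b', hb'⟩
  · exact hdisjoint hij hi hj
  · exact spoke_notMem i _ (hb' ▸ hi)
  · exact spoke_notMem j _ hj
  · exact hij (congrArg Prod.fst (hp (Sym2.congr_right.1 hb')))

/-- The inclusion of `H` into `K₁ ∇ H`. -/
def joinK1Hom (H : SimpleGraph V) : H →g joinK1 H where
  toFun := some
  map_rel' h := by simp [joinK1, h, h.ne]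

theorem joinK1_adj_none_some (H : SimpleGraph V) (v : V) : (joinK1 H).Adj none (some v) := by
  simp [joinK1]

theorem hasEDC_joinK1_of_embedding {H : SimpleGraph V} (hH : H.Preconnected) {m : ℕ}
    (p : Fin m × Bool ↪ V) : HasEDC (joinK1 H) m := by
  obtain ⟨σ, w, hpath, hdisjoint⟩ := exists_perm_pairwise_disjoint_paths hH p
  have hinj : Function.Injective (joinK1Hom H) := Option.some_injective V
  refine hasEDC_of_pairwise_disjoint_paths (x := none) (p := fun k ↦ joinK1Hom H (p (σ k)))
    (w := fun i ↦ (w i).map (joinK1Hom H)) (hinj.comp (p.injective.comp σ.injective))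
    (fun k ↦ joinK1_adj_none_some H _) (fun i ↦ (hpath i).map hinj) (fun i ↦ ?_)
    (fun i j hij ↦ ?_)
  · simp [joinK1Hom]
  · simpa only [SimpleGraph.Walk.edges_map] using
      (hdisjoint hij).map (Sym2.map.injective hinj)

end ApexCycles

section Counting

variable {V : Type*} {G : SimpleGraph V}

theorem HasEDC.le_ecard [Finite G.edgeSet] {m : ℕ} (h : HasEDC G m) : m ≤ ecard G := by
  obtain ⟨c, hcycle, hdisjoint⟩ := h
  have hne (i : Fin m) : ∃ e, e ∈ (c i).2.edges :=
    List.exists_mem_of_ne_nil _ (by simpa using (hcycle i).ne_nil)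
  choose e he using hne
  have hinj : Function.Injective
      fun i ↦ (⟨e i, (c i).2.edges_subset_edgeSet (he i)⟩ : G.edgeSet) := by
    intro i j hij
    by_contra hij_ne
    have heq : e i = e j := congrArg Subtype.val hij
    exact hdisjoint i j hij_ne (e i) (he i) (heq ▸ he j)
  simpa [ecard] using Nat.card_le_card_of_injective _ hinj

theorem HasEDC.le_phi [Finite G.edgeSet] {m : ℕ} (h : HasEDC G m) : m ≤ phi G :=
  le_csSup ⟨ecard G, fun _ ↦ HasEDC.le_ecard⟩ h

theorem ecard_le_card_choose_two [Fintype V] : ecard G ≤ (Fintype.card V).choose 2 := by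
  rw [ecard, Nat.card_eq_fintype_card, SimpleGraph.card_edgeSet]
  exact G.card_edgeFinset_le_card_choose_two

theorem card_div_two_le_phi_joinK1 [Fintype V] (hG : G.Preconnected) :
    Fintype.card V / 2 ≤ phi (joinK1 G) := by
  obtain ⟨p⟩ : Nonempty (Fin (Fintype.card V / 2) × Bool ↪ V) :=
    Function.Embedding.nonempty_of_card_le (by simpa using Nat.div_mul_le_self _ 2)
  exact (hasEDC_joinK1_of_embedding hG p).le_phi

end Counting

/-- If `H` is connected with at least two vertices and `s = φ(K₁ ∇ H)`, then
`v(H) ≤ 2s + 1` and `e(H) ≤ s(2s+1)`. -/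
theorem card_le_of_phi_joinK1 {V : Type*} [Fintype V] (H : SimpleGraph V)
    (hconn : H.Connected) (h2 : 2 ≤ Fintype.card V) :
    Fintype.card V ≤ 2 * phi (joinK1 H) + 1 ∧
    ecard H ≤ phi (joinK1 H) * (2 * phi (joinK1 H) + 1) := by
  have hhalf := card_div_two_le_phi_joinK1 hconn.preconnected
  set s := phi (joinK1 H)
  have hcard : Fintype.card V ≤ 2 * s + 1 := by omega
  refine ⟨hcard, ?_⟩
  calc ecard H ≤ (Fintype.card V).choose 2 := ecard_le_card_choose_two
    _ ≤ (2 * s + 1).choose 2 := Nat.choose_le_choose 2 hcard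
    _ = s * (2 * s + 1) := by
      rw [Nat.choose_two_right, Nat.add_sub_cancel, mul_left_comm,
        Nat.mul_div_cancel_left _ two_pos, mul_comm]

end PaperEDC
end

section
/- Let k ≥ 1 and let G be a simple graph with a dominating vertex u* such that G contains no k pairwise edge-disjoint cycles (φ(G) ≤ k−1). Then e(G − u*) ≤ (k−1) + 2(k−1)²; in particular e(G − u*) < 2k². -/
open scoped Classical

namespace PaperEDC

/-!
Write `H = G - u` and `f m = m + 2 * m ^ 2`. By induction on `m`, a graph `H` with more than `f m`
edges forces `m + 1` edge-disjoint cycles in `G`. If some vertex `v` has degree at least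
`2 * (m + 1)` in `H`, its neighbours, taken in pairs, give that many edge-disjoint four-cycles
through `u` and `v`. Otherwise some edge `xy` of `H` has so small a degree sum that deleting `x` and
`y` leaves more than `f (m - 1)` edges, and the triangle `uxy` shares no edge with what is left.
Were there no such edge, some vertex would have degree exactly `2 * m + 1` and so many edges at its
neighbours that the degrees in its closed neighbourhood alone would sum to more than twice the
number of edges. For infinite `V`, a graph with too many edges already has too many among finitely
many vertices.
-/

section Subgraph

open SimpleGraph

variable {V : Type*} {G H : SimpleGraph V} {u x : V}

theorem deleteIncidenceSet_mono (hHG : H ≤ G) (x : V) :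
    H.deleteIncidenceSet x ≤ G.deleteIncidenceSet x := by
  intro v w
  simp only [deleteIncidenceSet_adj]
  exact And.imp_left fun h ↦ hHG h

theorem support_deleteIncidenceSet_subset_neighborSet (hu : H.support ⊆ G.neighborSet u)
    (hux : u ≠ x) :
    (H.deleteIncidenceSet x).support ⊆ (G.deleteIncidenceSet x).neighborSet u := by
  intro v hv
  obtain ⟨hvH, hvx⟩ := H.support_deleteIncidenceSet_subset x hv
  exact deleteIncidenceSet_adj.2 ⟨hu hvH, hux, hvx⟩

theorem erase_subset_commonNeighbors_deleteIncidenceSet {v : V} {T : Finset V}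
    (hT : ↑T ⊆ G.commonNeighbors u v) (hx : x ∈ G.commonNeighbors u v) :
    ↑(T.erase x) ⊆ (G.deleteIncidenceSet x).commonNeighbors u v := by
  intro t ht
  obtain ⟨htx, htT⟩ := Finset.mem_erase.1 ht
  obtain ⟨hux, hvx⟩ := G.mem_commonNeighbors.1 hx
  obtain ⟨hut, hvt⟩ := G.mem_commonNeighbors.1 (hT htT)
  exact ⟨deleteIncidenceSet_adj.2 ⟨hut, hux.ne, htx⟩, deleteIncidenceSet_adj.2 ⟨hvt, hvx.ne, htx⟩⟩

theorem exists_lt_card_edgeFinset_induce {n : ℕ} (hn : n < H.edgeSet.encard) (u : V) :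
    ∃ W : Finset V, u ∈ W ∧ n < (H.induce (W : Set V)).edgeFinset.card := by
  obtain ⟨E, hEH, hE⟩ := Set.exists_subset_encard_eq (Order.add_one_le_of_lt hn)
  lift E to Finset (Sym2 V) using Set.finite_of_encard_eq_coe hE
  let W : Finset V := insert u (E.biUnion Sym2.toFinset)
  have hEW : (E : Set (Sym2 V)) ⊆ Sym2.map (↑) '' (H.induce (W : Set V)).edgeSet := by
    intro e he
    induction e with | _ x y
    have hW {v : V} (hv : v ∈ s(x, y)) : v ∈ W :=
      Finset.mem_insert_of_mem (Finset.mem_biUnion.2 ⟨_, he, Sym2.mem_toFinset.2 hv⟩)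
    exact ⟨s(⟨x, hW (Sym2.mem_mk_left x y)⟩, ⟨y, hW (Sym2.mem_mk_right x y)⟩), hEH he, rfl⟩
  have hcard := (Set.encard_le_encard hEW).trans (Set.encard_image_le _ _)
  rw [hE, ← coe_edgeFinset, Set.encard_coe_eq_coe_finsetCard] at hcard
  exact ⟨W, Finset.mem_insert_self u _, by exact_mod_cast hcard⟩

end Subgraph

namespace HasEDC

open SimpleGraph

variable {V : Type*} {F G : SimpleGraph V} {m : ℕ}

theorem zero (G : SimpleGraph V) : HasEDC G 0 :=
  ⟨Fin.elim0, fun i ↦ i.elim0, fun i ↦ i.elim0⟩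

theorem map {V' : Type*} {G' : SimpleGraph V'} (h : HasEDC G m) (f : G →g G')
    (hf : Function.Injective f) : HasEDC G' m := by
  obtain ⟨c, hcycle, hdisj⟩ := h
  refine ⟨fun i ↦ ⟨f (c i).1, (c i).2.map f⟩, fun i ↦ (hcycle i).map hf,
    fun i j hij e hei hej ↦ ?_⟩
  simp only [Walk.edges_map, List.mem_map] at hei hej
  obtain ⟨e, he, rfl⟩ := hei
  obtain ⟨e', he', heq⟩ := hej
  exact hdisj i j hij e he (Sym2.map.injective hf heq ▸ he')

theorem succ (h : HasEDC F m) (hFG : F ≤ G) {v : V} {w : G.Walk v v} (hw : w.IsCycle)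
    (hwF : ∀ e ∈ w.edges, e ∉ F.edgeSet) : HasEDC G (m + 1) := by
  obtain ⟨c, hcycle, hdisj⟩ := h
  have hmem (i : Fin m) (e : Sym2 V) (he : e ∈ ((c i).2.mapLe hFG).edges) : e ∈ (c i).2.edges := by
    rwa [Walk.edges_mapLe_eq_edges] at he
  have hF (i : Fin m) (e : Sym2 V) (he : e ∈ ((c i).2.mapLe hFG).edges) : e ∈ F.edgeSet :=
    (c i).2.edges_subset_edgeSet (hmem i e he)
  refine ⟨Fin.cons ⟨v, w⟩ fun i ↦ ⟨(c i).1, (c i).2.mapLe hFG⟩,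
    Fin.cases hw fun i ↦ (hcycle i).mapLe hFG,
    Fin.cases (Fin.cases ?_ fun j ↦ ?_) fun i ↦ Fin.cases ?_ fun j ↦ ?_⟩
  · exact fun h ↦ absurd rfl h
  · exact fun _ e hew hej ↦ hwF e hew (hF j e hej)
  · exact fun _ e hei hew ↦ hwF e hew (hF i e hei)
  · exact fun hij e hei hej ↦
      hdisj i j (fun h ↦ hij (congrArg _ h)) e (hmem i e hei) (hmem j e hej)

theorem succ_of_deleteIncidenceSet {x y : V}
    (h : HasEDC ((G.deleteIncidenceSet x).deleteIncidenceSet y) m) {v : V} {w : G.Walk v v}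
    (hw : w.IsCycle) (hwxy : ∀ e ∈ w.edges, x ∈ e ∨ y ∈ e) : HasEDC G (m + 1) := by
  refine h.succ ((deleteIncidenceSet_le _ _).trans (deleteIncidenceSet_le _ _)) hw
    fun e he heF ↦ ?_
  simp only [edgeSet_deleteIncidenceSet, incidenceSet, Set.mem_sdiff, Set.mem_ofPred_eq,
    not_and] at heF
  exact (hwxy e he).elim (heF.1.2 heF.1.1) (heF.2 heF.1)

theorem succ_of_triangle {u x y : V}
    (h : HasEDC ((G.deleteIncidenceSet x).deleteIncidenceSet y) m)
    (hux : G.Adj u x) (hxy : G.Adj x y) (hyu : G.Adj y u) : HasEDC G (m + 1) := by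
  have hw : (Walk.cons hux (.cons hxy (.cons hyu .nil))).IsCycle := by
    simp [Walk.cons_isCycle_iff, Walk.isPath_def, hux.ne, hux.ne', hxy.ne, hyu.ne,
      hyu.ne']
  exact h.succ_of_deleteIncidenceSet hw (by simp)

theorem succ_of_four_cycle {u v x y : V}
    (h : HasEDC ((G.deleteIncidenceSet x).deleteIncidenceSet y) m) (huv : u ≠ v) (hxy : x ≠ y)
    (hx : x ∈ G.commonNeighbors u v) (hy : y ∈ G.commonNeighbors u v) : HasEDC G (m + 1) := by
  obtain ⟨hux, hvx⟩ := G.mem_commonNeighbors.1 hx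
  obtain ⟨huy, hvy⟩ := G.mem_commonNeighbors.1 hy
  have hw : (Walk.cons hux (.cons hvx.symm (.cons hvy (.cons huy.symm .nil)))).IsCycle := by
    simp [Walk.cons_isCycle_iff, Walk.isPath_def, hux.ne, hux.ne', huy.ne, huy.ne',
      hvx.ne', hvy.ne, huv, huv.symm, hxy]
  exact h.succ_of_deleteIncidenceSet hw (by simp)

theorem of_two_mul_le_card_commonNeighbors {u v : V} (huv : u ≠ v) {T : Finset V}
    (hT : ↑T ⊆ G.commonNeighbors u v) (hcard : 2 * m ≤ T.card) : HasEDC G m := by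
  induction m generalizing G T with
  | zero => exact zero G
  | succ m ih =>
    obtain ⟨x, hx, y, hy, hxy⟩ := Finset.one_lt_card.1 (by lia : 1 < T.card)
    have hyTx : y ∈ T.erase x := Finset.mem_erase.2 ⟨hxy.symm, hy⟩
    have hTx := erase_subset_commonNeighbors_deleteIncidenceSet hT (hT hx)
    have hTxy := erase_subset_commonNeighbors_deleteIncidenceSet hTx (hTx hyTx)
    have hrest := ih hTxy (by
      rw [Finset.card_erase_of_mem hyTx, Finset.card_erase_of_mem hx]
      lia)
    exact hrest.succ_of_four_cycle huv hxy (hT hx) (hT hy)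

theorem le_ecard_s8 [Finite G.edgeSet] (h : HasEDC G m) : m ≤ ecard G := by
  obtain ⟨c, hcycle, hdisj⟩ := h
  have hne (i : Fin m) : ∃ e, e ∈ (c i).2.edges :=
    List.exists_mem_of_ne_nil _ (by simpa using (hcycle i).ne_nil)
  choose f hf using hne
  let edge (i : Fin m) : G.edgeSet := ⟨f i, (c i).2.edges_subset_edgeSet (hf i)⟩
  have hinj : Function.Injective edge := by
    intro i j hij
    by_contra hne
    exact hdisj i j hne (f i) (hf i) (Subtype.mk_eq_mk.1 hij ▸ hf j)
  simpa [ecard] using Nat.card_le_card_of_injective edge hinj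

theorem le_phi_s8 [Finite G.edgeSet] (h : HasEDC G m) : m ≤ phi G :=
  le_csSup ⟨ecard G, fun _ ↦ le_ecard_s8⟩ h

end HasEDC

section Counting

open SimpleGraph

variable {V : Type*} [Fintype V] (H : SimpleGraph V) [DecidableRel H.Adj]

theorem card_edgeFinset_deleteIncidenceSet_deleteIncidenceSet {x y : V} (hxy : H.Adj x y) :
    ((H.deleteIncidenceSet x).deleteIncidenceSet y).edgeFinset.card + (H.degree x + H.degree y) =
      H.edgeFinset.card + 1 := by
  have hdeg : (H.deleteIncidenceSet x).degree y + 1 = H.degree y := by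
    have hnbr : (H.deleteIncidenceSet x).neighborFinset y = (H.neighborFinset y).erase x := by
      ext z
      simp [deleteIncidenceSet_adj, hxy.ne', and_comm]
    rw [← card_neighborFinset_eq_degree, hnbr,
      Finset.card_erase_add_one (by simpa using hxy.symm), card_neighborFinset_eq_degree]
  have hx := H.degree_le_card_edgeFinset (v := x)
  have hy := (H.deleteIncidenceSet x).degree_le_card_edgeFinset (v := y)
  have hHx := H.card_edgeFinset_deleteIncidenceSet x
  have hHxy := (H.deleteIncidenceSet x).card_edgeFinset_deleteIncidenceSet y
  lia

theorem degree_mul_add_one_le {s : ℕ} {x : V}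
    (hs : ∀ y, H.Adj x y → s ≤ H.degree x + H.degree y) :
    H.degree x * (s + 1) ≤ 2 * H.edgeFinset.card + H.degree x ^ 2 := by
  have hnbr : H.degree x * s ≤ H.degree x ^ 2 + ∑ y ∈ H.neighborFinset x, H.degree y := by
    simpa [Finset.sum_add_distrib, sq] using
      Finset.card_nsmul_le_sum (H.neighborFinset x) _ s fun y hy ↦ hs y (by simpa using hy)
  have hclosed : H.degree x + ∑ y ∈ H.neighborFinset x, H.degree y ≤ 2 * H.edgeFinset.card := by
    calc
      _ = ∑ v ∈ insert x (H.neighborFinset x), H.degree v :=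
        (Finset.sum_insert (H.notMem_neighborFinset_self x)).symm
      _ ≤ ∑ v, H.degree v := Finset.sum_le_sum_of_subset (Finset.subset_univ _)
      _ = _ := H.sum_degrees_eq_twice_card_edges
  lia

theorem exists_adj_degree_add_degree_le {m : ℕ} (hdeg : ∀ v, H.degree v ≤ 2 * m + 3)
    (hcard : (m + 1) + 2 * (m + 1) ^ 2 < H.edgeFinset.card) :
    ∃ x y, H.Adj x y ∧ H.degree x + H.degree y + (m + 2 * m ^ 2) ≤ H.edgeFinset.card := by
  obtain ⟨t, ht⟩ := Nat.exists_eq_add_of_lt hcard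
  by_contra! hlarge
  have hsum {x y : V} (hxy : H.Adj x y) : 4 * m + 5 + t ≤ H.degree x + H.degree y := by
    linarith [hlarge x y hxy]
  obtain ⟨x, hx⟩ : ∃ x, H.degree x = 2 * m + 3 := by
    obtain ⟨e, he⟩ := Finset.card_pos.1 (Nat.zero_lt_of_lt hcard)
    induction e with | _ a b
    have hab := hsum (mem_edgeFinset.1 he)
    by_contra! hne
    have ha := lt_of_le_of_ne (hdeg a) (hne a)
    have hb := lt_of_le_of_ne (hdeg b) (hne b)
    lia
  have hstar := degree_mul_add_one_le H (x := x) fun _ ↦ hsum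
  rw [hx, ht] at hstar
  have hexcess : (2 * m + 1) * (t + 1) ≤ 0 := by linarith
  exact hexcess.not_gt (by positivity)

end Counting

section Cone

open SimpleGraph

variable {V : Type*} {G H : SimpleGraph V} {u : V}

theorem hasEDC_of_two_mul_le_degree [Fintype V] [DecidableRel H.Adj] (hHG : H ≤ G)
    (hu : H.support ⊆ G.neighborSet u) {v : V} {m : ℕ} (hv : 2 * m ≤ H.degree v) :
    HasEDC G m := by
  obtain rfl | hm := m.eq_zero_or_pos
  · exact .zero G
  have hvu : G.Adj u v := hu ((H.degree_pos_iff_mem_support v).1 (by lia))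
  refine HasEDC.of_two_mul_le_card_commonNeighbors hvu.ne (T := H.neighborFinset v)
    (fun t ht ↦ ?_) (by rwa [H.card_neighborFinset_eq_degree])
  have hvt : H.Adj v t := by simpa using ht
  exact G.mem_commonNeighbors.2 ⟨hu ⟨v, hvt.symm⟩, hHG hvt⟩

theorem hasEDC_of_lt_card_edgeFinset [Fintype V] [DecidableRel H.Adj] (hHG : H ≤ G)
    (hu : H.support ⊆ G.neighborSet u) {m : ℕ} (hcard : m + 2 * m ^ 2 < H.edgeFinset.card) :
    HasEDC G (m + 1) := by
  induction m generalizing G H with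
  | zero =>
    obtain ⟨e, he⟩ := Finset.card_pos.1 (Nat.zero_lt_of_lt hcard)
    induction e with | _ x y
    have hxy : H.Adj x y := mem_edgeFinset.1 he
    exact (HasEDC.zero _).succ_of_triangle (hu ⟨y, hxy⟩) (hHG hxy) (hu ⟨x, hxy.symm⟩).symm
  | succ m ih =>
    by_cases hdeg : ∃ v, 2 * (m + 2) ≤ H.degree v
    · obtain ⟨v, hv⟩ := hdeg
      exact hasEDC_of_two_mul_le_degree hHG hu hv
    push Not at hdeg
    obtain ⟨x, y, hxy, hsum⟩ :=
      exists_adj_degree_add_degree_le H (fun v ↦ Nat.lt_succ_iff.1 (hdeg v)) hcard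
    have hux : G.Adj u x := hu ⟨y, hxy⟩
    have huy : G.Adj u y := hu ⟨x, hxy.symm⟩
    have hdel := card_edgeFinset_deleteIncidenceSet_deleteIncidenceSet H hxy
    have hrest := ih (deleteIncidenceSet_mono (deleteIncidenceSet_mono hHG x) y)
      (support_deleteIncidenceSet_subset_neighborSet
        (support_deleteIncidenceSet_subset_neighborSet hu hux.ne) huy.ne) (by lia)
    exact hrest.succ_of_triangle hux (hHG hxy) huy.symm

theorem encard_edgeSet_le_of_not_hasEDC (hHG : H ≤ G) (hu : H.support ⊆ G.neighborSet u) {m : ℕ}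
    (hG : ¬HasEDC G (m + 1)) : H.edgeSet.encard ≤ (m + 2 * m ^ 2 : ℕ) := by
  by_contra! hcard
  obtain ⟨W, huW, hW⟩ := exists_lt_card_edgeFinset_induce hcard u
  have hsupp : (H.induce (W : Set V)).support ⊆ (G.induce (W : Set V)).neighborSet ⟨u, huW⟩ :=
    fun _ ⟨y, hxy⟩ ↦ hu ⟨y, hxy⟩
  have hGW := hasEDC_of_lt_card_edgeFinset (comap_monotone _ hHG) hsupp hW
  exact hG (hGW.map (Embedding.induce _).toHom Subtype.val_injective)

end Cone

theorem ecard_minus_dominating_lt_general {V : Type*} (k : ℕ) (G : SimpleGraph V) (u : V)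
    (hu : ∀ v, v ≠ u → G.Adj u v) (hG : ¬HasEDC G k) :
    (G.induce ({u}ᶜ : Set V)).edgeSet.Finite ∧
    ecard (G.induce ({u}ᶜ : Set V)) ≤ (k - 1) + 2 * (k - 1) ^ 2 ∧
    ecard (G.induce ({u}ᶜ : Set V)) < 2 * k ^ 2 := by
  obtain _ | m := k
  · exact absurd (HasEDC.zero G) hG
  have hsupp : (G.induce ({u}ᶜ : Set V)).spanningCoe.support ⊆ G.neighborSet u := by
    rintro v ⟨w, hvw⟩
    exact hu v (by rintro rfl; simp at hvw)
  have hle := encard_edgeSet_le_of_not_hasEDC (SimpleGraph.spanningCoe_induce_le G _) hsupp hG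
  rw [SimpleGraph.edgeSet_map, (Function.Embedding.injective _).encard_image,
    Set.encard_le_coe_iff_finite_ncard_le] at hle
  exact ⟨hle.1, hle.2, hle.2.trans_lt (by lia)⟩

/-- If `G` has a dominating vertex `u*` and no `k` pairwise edge-disjoint cycles, then
`e(G - u*) ≤ (k-1) + 2(k-1)²` and in particular `e(G - u*) < 2k²`. -/
theorem ecard_minus_dominating_lt {V : Type*} [Fintype V] (k : ℕ) (hk : 1 ≤ k)
    (G : SimpleGraph V) (u : V) (hu : ∀ v, v ≠ u → G.Adj u v) (hphi : phi G ≤ k - 1) :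
    ecard (G.induce ({u}ᶜ : Set V)) ≤ (k - 1) + 2 * (k - 1) ^ 2 ∧
    ecard (G.induce ({u}ᶜ : Set V)) < 2 * k ^ 2 :=
  (ecard_minus_dominating_lt_general k G u hu fun h ↦
    (h.le_phi_s8.trans hphi).not_gt (by lia)).2

end PaperEDC
end
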